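/- Let X be a complete geodesic metric space, let S ⊆ ℝ² be a circle (the boundary of a Euclidean disc), equipped with the metric inherited from ℝ², let K ⊆ S be any subset, and let f : K → X be an L-Lipschitz map. Then there exists an (Lπ/2)-Lipschitz map F : S → X that agrees with f on K. -/

import Mathlib

open MeasureTheory Metric Set
open scoped ENNReal NNReal

noncomputable section

abbrev Heis (n : ℕ) := EuclideanSpace ℝ (Fin (2*n+1))
abbrev Horiz (n : ℕ) := EuclideanSpace ℝ (Fin (2*n))

def xIdx (n : ℕ) (j : Fin n) : Fin (2*n+1) := ⟨2*j.1, by have := j.2; omega⟩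
def yIdx (n : ℕ) (j : Fin n) : Fin (2*n+1) := ⟨2*j.1+1, by have := j.2; omega⟩
def tIdx (n : ℕ) : Fin (2*n+1) := ⟨2*n, by omega⟩
def xIdx2 (n : ℕ) (j : Fin n) : Fin (2*n) := ⟨2*j.1, by have := j.2; omega⟩
def yIdx2 (n : ℕ) (j : Fin n) : Fin (2*n) := ⟨2*j.1+1, by have := j.2; omega⟩

/-- The Korányi distance on the Heisenberg group `ℍ^n = ℝ^{2n+1}`. -/
def dK (n : ℕ) (p q : Heis n) : ℝ :=
  ((∑ j : Fin n, ((p (xIdx n j) - q (xIdx n j))^2 + (p (yIdx n j) - q (yIdx n j))^2))^2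
    + (p (tIdx n) - q (tIdx n)
        + 2 * ∑ j : Fin n, (q (xIdx n j) * p (yIdx n j) - p (xIdx n j) * q (yIdx n j)))^2)
    ^ ((1:ℝ)/4)

/-- The kernel of the standard contact form `α = dt + 2∑ (x_j dy_j − y_j dx_j)` at `p`. -/
def kerAlpha (n : ℕ) (p : Heis n) : Set (Heis n) :=
  {v | v (tIdx n)
    + 2 * ∑ j : Fin n, (p (xIdx n j) * v (yIdx n j) - p (yIdx n j) * v (xIdx n j)) = 0}

/-- The standard symplectic form on `ℝ^{2n}`. -/
def omegaF (n : ℕ) (v w : Horiz n) : ℝ :=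
  ∑ j : Fin n, (v (xIdx2 n j) * w (yIdx2 n j) - v (yIdx2 n j) * w (xIdx2 n j))

/-- The projection `π : ℝ^{2n+1} → ℝ^{2n}` forgetting the `t`-coordinate. -/
def piH (n : ℕ) (p : Heis n) : Horiz n :=
  (EuclideanSpace.equiv (Fin (2*n)) ℝ).symm (fun i => p ⟨i.1, by have := i.2; omega⟩)

/-- Diameter of a set with respect to the Korányi distance, as an extended real. -/
def kDiam (n : ℕ) (U : Set (Heis n)) : ℝ≥0∞ :=
  ⨆ p ∈ U, ⨆ q ∈ U, ENNReal.ofReal (dK n p q)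

/-- `S` is null for the `k`-dimensional Hausdorff measure built from the Korányi
distance: its `k`-dimensional Hausdorff content is arbitrarily small. -/
def IsHausdorffNullK (n k : ℕ) (S : Set (Heis n)) : Prop :=
  ∀ ε : ℝ≥0∞, 0 < ε → ∃ U : ℕ → Set (Heis n),
    (S ⊆ ⋃ i, U i) ∧ ∑' i, (kDiam n (U i)) ^ k < ε

/-- `f` is Lipschitz on `E` as a map into `(ℝ^{2n+1}, d_K)`. -/
def LipschitzOnK (n : ℕ) {k : ℕ} (f : EuclideanSpace ℝ (Fin k) → Heis n)
    (E : Set (EuclideanSpace ℝ (Fin k))) : Prop :=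
  ∃ L : ℝ, 0 ≤ L ∧ ∀ x ∈ E, ∀ y ∈ E, dK n (f x) (f y) ≤ L * dist x y

end
/-- A metric space is geodesic if any two points are joined by a curve
parameterized by arc-length realizing the distance. -/
def IsGeodesicSpace (X : Type*) [MetricSpace X] : Prop :=
  ∀ x y : X, ∃ γ : ℝ → X, γ 0 = x ∧ γ (dist x y) = y ∧
    ∀ s ∈ Set.Icc (0:ℝ) (dist x y), ∀ t ∈ Set.Icc (0:ℝ) (dist x y),
      dist (γ s) (γ t) = |s - t|

/-- In a geodesic space, points at distance at most `C * (b - a)` are joined by a `C`-Lipschitz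
curve parameterized by `[a, b]`. -/
theorem IsGeodesicSpace.exists_lipschitzOnWith_Icc {X : Type*} [MetricSpace X]
    (hX : IsGeodesicSpace X) {C : ℝ≥0} {x y : X} {a b : ℝ} (hab : a ≤ b)
    (hxy : dist x y ≤ C * (b - a)) :
    ∃ σ : ℝ → X, σ a = x ∧ σ b = y ∧ LipschitzOnWith C σ (Icc a b) := by
  rcases hab.eq_or_lt with rfl | hlt
  · have : x = y := dist_le_zero.1 (by simpa using hxy)
    exact ⟨fun _ => x, rfl, this, (LipschitzWith.const' x).lipschitzOnWith⟩
  obtain ⟨γ, h0, h1, hγ⟩ := hX x y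
  have hba : 0 < b - a := sub_pos.2 hlt
  have hmem : ∀ t ∈ Icc a b, dist x y / (b - a) * (t - a) ∈ Icc 0 (dist x y) := by
    intro t ht
    have h₁ : 0 ≤ t - a := sub_nonneg.2 ht.1
    refine ⟨by positivity, ?_⟩
    calc dist x y / (b - a) * (t - a) ≤ dist x y / (b - a) * (b - a) := by
          gcongr
          exact ht.2
      _ = dist x y := by field_simp
  refine ⟨fun t => γ (dist x y / (b - a) * (t - a)), by simpa using h0, ?_, ?_⟩
  · have h : dist x y / (b - a) * (b - a) = dist x y := by field_simp
    simp only [h, h1]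
  · refine LipschitzOnWith.of_dist_le_mul fun s hs t ht => ?_
    rw [hγ _ (hmem s hs) _ (hmem t ht), ← mul_sub, sub_sub_sub_cancel_right, abs_mul,
      abs_of_nonneg (by positivity), Real.dist_eq]
    gcongr
    exact (div_le_iff₀ hba).2 hxy

/-- A Lipschitz map into a complete space extends to the closure with the same constant. -/
theorem LipschitzOnWith.exists_extension_closure {Y X : Type*} [MetricSpace Y] [MetricSpace X]
    [CompleteSpace X] {C : ℝ≥0} {g : Y → X} {A : Set Y} (hg : LipschitzOnWith C g A) :
    ∃ G : Y → X, LipschitzOnWith C G (closure A) ∧ EqOn G g A := by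
  have hlim : ∀ x ∈ closure A, Filter.Tendsto g (nhdsWithin x A) (nhds (extendFrom A g x)) := by
    intro x hx
    have := mem_closure_iff_nhdsWithin_neBot.1 hx
    have hc : Cauchy (nhdsWithin x A) := cauchy_nhds.mono nhdsWithin_le_nhds
    exact tendsto_extendFrom (cauchy_map_iff_exists_tendsto.1
      (hc.map_of_le hg.uniformContinuousOn inf_le_right))
  refine ⟨extendFrom A g, LipschitzOnWith.of_dist_le_mul fun x hx y hy => ?_,
    extendFrom_extends hg.continuousOn⟩
  have := mem_closure_iff_nhdsWithin_neBot.1 hx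
  have := mem_closure_iff_nhdsWithin_neBot.1 hy
  have hpair : Filter.Tendsto (fun p : Y × Y => dist (g p.1) (g p.2))
      (nhdsWithin x A ×ˢ nhdsWithin y A)
      (nhds (dist (extendFrom A g x) (extendFrom A g y))) :=
    ((hlim x hx).comp Filter.tendsto_fst).dist ((hlim y hy).comp Filter.tendsto_snd)
  have hdist : Filter.Tendsto (fun p : Y × Y => C * dist p.1 p.2)
      (nhdsWithin x A ×ˢ nhdsWithin y A) (nhds (C * dist x y)) := by
    have hfst : Filter.Tendsto Prod.fst (nhdsWithin x A ×ˢ nhdsWithin y A) (nhds x) :=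
      Filter.tendsto_fst.mono_right nhdsWithin_le_nhds
    have hsnd : Filter.Tendsto Prod.snd (nhdsWithin x A ×ˢ nhdsWithin y A) (nhds y) :=
      Filter.tendsto_snd.mono_right nhdsWithin_le_nhds
    exact (hfst.dist hsnd).const_mul _
  refine le_of_tendsto_of_tendsto hpair hdist ?_
  filter_upwards [Filter.prod_mem_prod self_mem_nhdsWithin self_mem_nhdsWithin] with p hp
  exact hg.dist_le_mul _ hp.1 _ hp.2

/-- A Lipschitz map from a closed set of reals into a geodesic space extends, with the same
constant, to any interval whose endpoints lie in the set. -/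
theorem IsGeodesicSpace.exists_extension_Icc_of_isClosed {X : Type*} [MetricSpace X]
    (hX : IsGeodesicSpace X) {C : ℝ≥0} {g : ℝ → X} {B : Set ℝ} (hB : IsClosed B)
    (hg : LipschitzOnWith C g B) {p q : ℝ} (hp : p ∈ B) (hq : q ∈ B) :
    ∃ G : ℝ → X, LipschitzOnWith C G (Icc p q) ∧ EqOn G g (B ∩ Icc p q) := by
  have hcurve : ∀ a b : ℝ, ∃ σ : ℝ → X, a ∈ B → b ∈ B → a ≤ b →
      σ a = g a ∧ σ b = g b ∧ LipschitzOnWith C σ (Icc a b) := by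
    intro a b
    by_cases h : a ∈ B ∧ b ∈ B ∧ a ≤ b
    · obtain ⟨ha, hb, hab⟩ := h
      have hd := hg.dist_le_mul a ha b hb
      rw [dist_comm a b, Real.dist_eq, abs_of_nonneg (sub_nonneg.2 hab)] at hd
      obtain ⟨σ, hσ⟩ := hX.exists_lipschitzOnWith_Icc hab hd
      exact ⟨σ, fun _ _ _ => hσ⟩
    · exact ⟨g, fun ha hb hab => absurd ⟨ha, hb, hab⟩ h⟩
  choose σ hσ using hcurve
  set lo : ℝ → ℝ := fun t => sSup (B ∩ Iic t)
  set hi : ℝ → ℝ := fun t => sInf (B ∩ Ici t)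
  have lo_greatest : ∀ t ∈ Icc p q, IsGreatest (B ∩ Iic t) (lo t) := fun t ht =>
    (hB.inter isClosed_Iic).isGreatest_csSup ⟨p, hp, ht.1⟩ ⟨t, fun _ h => h.2⟩
  have hi_least : ∀ t ∈ Icc p q, IsLeast (B ∩ Ici t) (hi t) := fun t ht =>
    (hB.inter isClosed_Ici).isLeast_csInf ⟨q, hq, ht.2⟩ ⟨t, fun _ h => h.2⟩
  have hσt : ∀ t ∈ Icc p q, σ (lo t) (hi t) (lo t) = g (lo t) ∧
      σ (lo t) (hi t) (hi t) = g (hi t) ∧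
      LipschitzOnWith C (σ (lo t) (hi t)) (Icc (lo t) (hi t)) := fun t ht =>
    hσ _ _ (lo_greatest t ht).1.1 (hi_least t ht).1.1
      ((lo_greatest t ht).1.2.trans (hi_least t ht).1.2)
  refine ⟨fun t => σ (lo t) (hi t) t, ?_, ?_⟩
  · have hle : ∀ s ∈ Icc p q, ∀ t ∈ Icc p q, s ≤ t →
        dist (σ (lo s) (hi s) s) (σ (lo t) (hi t) t) ≤ C * (t - s) := by
      intro s hs t ht hst
      have hs_lo : lo s ≤ s := (lo_greatest s hs).1.2
      have hs_hi : s ≤ hi s := (hi_least s hs).1.2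
      have ht_lo : lo t ≤ t := (lo_greatest t ht).1.2
      have ht_hi : t ≤ hi t := (hi_least t ht).1.2
      obtain ⟨-, hσs, hLs⟩ := hσt s hs
      obtain ⟨hσt, -, hLt⟩ := hσt t ht
      by_cases hu : ∃ u ∈ B, s ≤ u ∧ u ≤ t
      · obtain ⟨u, huB, hsu, hut⟩ := hu
        have hsu' : hi s ≤ u := (hi_least s hs).2 ⟨huB, hsu⟩
        have hut' : u ≤ lo t := (lo_greatest t ht).2 ⟨huB, hut⟩
        have h₁ := hLs.dist_le_mul s ⟨hs_lo, hs_hi⟩ (hi s) ⟨hs_lo.trans hs_hi, le_rfl⟩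
        have h₂ := hg.dist_le_mul _ (hi_least s hs).1.1 _ (lo_greatest t ht).1.1
        have h₃ := hLt.dist_le_mul (lo t) ⟨le_rfl, ht_lo.trans ht_hi⟩ t ⟨ht_lo, ht_hi⟩
        rw [hσs, dist_comm s, Real.dist_eq, abs_of_nonneg (by linarith)] at h₁
        rw [dist_comm (hi s), Real.dist_eq, abs_of_nonneg (by linarith)] at h₂
        rw [hσt, dist_comm (lo t) t, Real.dist_eq, abs_of_nonneg (by linarith)] at h₃
        linarith [dist_triangle4 (σ (lo s) (hi s) s) (g (hi s)) (g (lo t)) (σ (lo t) (hi t) t)]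
      · push Not at hu
        have hlo_eq : lo t = lo s := by
          apply le_antisymm
          · refine (lo_greatest s hs).2 ⟨(lo_greatest t ht).1.1, ?_⟩
            by_contra h
            exact (hu _ (lo_greatest t ht).1.1 (not_le.1 h).le).not_ge ht_lo
          · exact (lo_greatest t ht).2 ⟨(lo_greatest s hs).1.1, hs_lo.trans hst⟩
        have hhi_eq : hi t = hi s := by
          apply le_antisymm
          · exact (hi_least t ht).2 ⟨(hi_least s hs).1.1, (hu _ (hi_least s hs).1.1 hs_hi).le⟩
          · exact (hi_least s hs).2 ⟨(hi_least t ht).1.1, hst.trans ht_hi⟩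
        rw [hlo_eq, hhi_eq]
        have h := hLs.dist_le_mul s ⟨hs_lo, hs_hi⟩ t ⟨hs_lo.trans hst, hhi_eq ▸ ht_hi⟩
        rwa [dist_comm s, Real.dist_eq, abs_of_nonneg (by linarith)] at h
    refine LipschitzOnWith.of_dist_le_mul fun s hs t ht => ?_
    rcases le_total s t with hst | hts
    · rw [dist_comm s, Real.dist_eq, abs_of_nonneg (sub_nonneg.2 hst)]
      exact hle s hs t ht hst
    · rw [dist_comm, Real.dist_eq, abs_of_nonneg (sub_nonneg.2 hts)]
      exact hle t ht s hs hts
  · rintro t ⟨htB, ht⟩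
    have hlo_eq : lo t = t :=
      le_antisymm (lo_greatest t ht).1.2 ((lo_greatest t ht).2 ⟨htB, mem_Iic.2 le_rfl⟩)
    have h := (hσt t ht).1
    rw [hlo_eq] at h
    simpa only [hlo_eq] using h

/-- The point at angle `θ` on the circle with centre `c` and radius `r`. -/
noncomputable def circlePoint (c : EuclideanSpace ℝ (Fin 2)) (r θ : ℝ) : EuclideanSpace ℝ (Fin 2) :=
  c + !₂[r * Real.cos θ, r * Real.sin θ]

theorem circlePoint_add_two_pi (c : EuclideanSpace ℝ (Fin 2)) (r θ : ℝ) :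
    circlePoint c r (θ + 2 * Real.pi) = circlePoint c r θ := by
  simp [circlePoint]

theorem dist_circlePoint (c : EuclideanSpace ℝ (Fin 2)) {r : ℝ} (hr : 0 ≤ r) (θ φ : ℝ) :
    dist (circlePoint c r θ) (circlePoint c r φ) = 2 * r * |Real.sin ((θ - φ) / 2)| := by
  rw [circlePoint, circlePoint, dist_add_left, EuclideanSpace.dist_eq, Fin.sum_univ_two,
    ← abs_of_nonneg (show 0 ≤ 2 * r by positivity), ← abs_mul, ← Real.sqrt_sq_eq_abs]
  congr 1
  have h : Real.sin ((θ - φ) / 2) ^ 2 = 1 / 2 - Real.cos (θ - φ) / 2 := by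
    rw [Real.sin_sq_eq_half_sub, mul_div_cancel₀ _ two_ne_zero]
  simp only [Real.dist_eq, sq_abs, mul_pow, h, Real.cos_sub]
  simp
  linear_combination r ^ 2 * Real.sin_sq_add_cos_sq θ + r ^ 2 * Real.sin_sq_add_cos_sq φ

theorem dist_circlePoint_le (c : EuclideanSpace ℝ (Fin 2)) {r : ℝ} (hr : 0 ≤ r) (θ φ : ℝ) :
    dist (circlePoint c r θ) (circlePoint c r φ) ≤ r * |θ - φ| := by
  rw [dist_circlePoint c hr]
  have h : |Real.sin ((θ - φ) / 2)| ≤ |θ - φ| / 2 := by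
    simpa [abs_div] using Real.abs_sin_le_abs (x := (θ - φ) / 2)
  nlinarith

theorem exists_circlePoint_eq {c : EuclideanSpace ℝ (Fin 2)} {r : ℝ}
    {x : EuclideanSpace ℝ (Fin 2)} (hx : x ∈ sphere c r) (θ₀ : ℝ) :
    ∃ θ ∈ Ico θ₀ (θ₀ + 2 * Real.pi), circlePoint c r θ = x := by
  set z : ℂ := ⟨(x - c) 0, (x - c) 1⟩ with hz
  have hnorm : ‖z‖ = r := by
    rw [← mem_sphere.1 hx, dist_eq_norm, EuclideanSpace.norm_eq, Fin.sum_univ_two,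
      Complex.norm_eq_sqrt_sq_add_sq]
    simp [hz]
  have hper : ∀ θ : ℝ, ∀ n : ℤ, circlePoint c r (θ - n • (2 * Real.pi)) = circlePoint c r θ := by
    intro θ n
    simp [circlePoint, Real.cos_sub_int_mul_two_pi, Real.sin_sub_int_mul_two_pi]
  refine ⟨toIcoMod Real.two_pi_pos θ₀ z.arg, toIcoMod_mem_Ico _ _ _, ?_⟩
  rw [toIcoMod, hper, circlePoint, ← hnorm, Complex.norm_mul_cos_arg, Complex.norm_mul_sin_arg]
  ext i
  fin_cases i <;> simp [hz]

/-- On a circle, the shorter arc is at most `π / 2` times the chord. -/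
theorem mul_min_le_dist_circlePoint (c : EuclideanSpace ℝ (Fin 2)) {r : ℝ} (hr : 0 ≤ r)
    {θ φ : ℝ} (hθφ : θ ≤ φ) (hφθ : φ ≤ θ + 2 * Real.pi) :
    r * min (φ - θ) (θ + 2 * Real.pi - φ) ≤
      Real.pi / 2 * dist (circlePoint c r θ) (circlePoint c r φ) := by
  have hbound : ∀ α β : ℝ, 0 ≤ β - α → β - α ≤ Real.pi →
      r * (β - α) ≤ Real.pi / 2 * dist (circlePoint c r α) (circlePoint c r β) := by
    intro α β h₀ h₁
    rw [dist_comm, dist_circlePoint c hr]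
    have hsin : 2 / Real.pi * ((β - α) / 2) ≤ |Real.sin ((β - α) / 2)| :=
      (Real.mul_le_sin (by linarith) (by linarith)).trans (le_abs_self _)
    have hpi := Real.pi_pos
    calc r * (β - α) = Real.pi / 2 * (2 * r * (2 / Real.pi * ((β - α) / 2))) := by field_simp
      _ ≤ _ := by gcongr
  rcases le_total (φ - θ) Real.pi with h | h
  · exact (mul_le_mul_of_nonneg_left (min_le_left _ _) hr).trans
      (hbound θ φ (by linarith) h)
  · refine (mul_le_mul_of_nonneg_left (min_le_right _ _) hr).trans ?_
    rw [← circlePoint_add_two_pi c r θ, dist_comm]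
    exact hbound φ (θ + 2 * Real.pi) (by linarith) (by linarith)

/-- An `L`-Lipschitz map from a subset `K` of a circle `S ⊆ ℝ²`
(with the chordal metric) into a complete geodesic metric space extends to an
`(Lπ/2)`-Lipschitz map on `S`. -/
theorem lipschitz_extension_circle {X : Type*} [MetricSpace X] [CompleteSpace X]
    (hX : IsGeodesicSpace X)
    (c : EuclideanSpace ℝ (Fin 2)) (r : ℝ) (hr : 0 < r)
    (K : Set (EuclideanSpace ℝ (Fin 2))) (hK : K ⊆ Metric.sphere c r)
    (L : ℝ) (hL : 0 ≤ L) (f : EuclideanSpace ℝ (Fin 2) → X)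
    (hf : ∀ x ∈ K, ∀ y ∈ K, dist (f x) (f y) ≤ L * dist x y) :
    ∃ F : EuclideanSpace ℝ (Fin 2) → X,
      (∀ x ∈ Metric.sphere c r, ∀ y ∈ Metric.sphere c r,
        dist (F x) (F y) ≤ (L * Real.pi / 2) * dist x y) ∧
      Set.EqOn F f K := by
  rcases K.eq_empty_or_nonempty with rfl | ⟨k, hk⟩
  · refine ⟨fun _ => f c, fun x _ y _ => ?_, eqOn_empty _ _⟩
    rw [dist_self]
    positivity
  obtain ⟨θ₀, -, hθ₀⟩ := exists_circlePoint_eq (hK hk) 0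
  set P := circlePoint c r
  obtain ⟨C, hC⟩ : ∃ C : ℝ≥0, (C : ℝ) = L * r :=
    ⟨(L * r).toNNReal, Real.coe_toNNReal _ (by positivity)⟩
  have hθ₁ : P (θ₀ + 2 * Real.pi) = k := (circlePoint_add_two_pi c r θ₀).trans hθ₀
  have hg : LipschitzOnWith C (f ∘ P) (P ⁻¹' K) := by
    refine LipschitzOnWith.of_dist_le_mul fun s hs t ht => (hf _ hs _ ht).trans ?_
    rw [hC, mul_assoc, Real.dist_eq]
    exact mul_le_mul_of_nonneg_left (dist_circlePoint_le c hr.le s t) hL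
  obtain ⟨g, hgLip, hgf⟩ := hg.exists_extension_closure
  have hmem₀ : θ₀ ∈ P ⁻¹' K := by rwa [mem_preimage, hθ₀]
  have hmem₁ : θ₀ + 2 * Real.pi ∈ P ⁻¹' K := by rwa [mem_preimage, hθ₁]
  obtain ⟨G, hGLip, hGg⟩ := hX.exists_extension_Icc_of_isClosed isClosed_closure hgLip
    (subset_closure hmem₀) (subset_closure hmem₁)
  have hGf : ∀ t ∈ Icc θ₀ (θ₀ + 2 * Real.pi), P t ∈ K → G t = f (P t) := fun t ht htK =>
    (hGg ⟨subset_closure htK, ht⟩).trans (hgf htK)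
  have hpi := Real.pi_pos
  have hend₀ : θ₀ ∈ Icc θ₀ (θ₀ + 2 * Real.pi) := ⟨le_rfl, by linarith⟩
  have hend₁ : θ₀ + 2 * Real.pi ∈ Icc θ₀ (θ₀ + 2 * Real.pi) := ⟨by linarith, le_rfl⟩
  have hG_ends : G θ₀ = G (θ₀ + 2 * Real.pi) := by
    rw [hGf _ hend₀ hmem₀, hGf _ hend₁ hmem₁, hθ₀, hθ₁]
  have hGle : ∀ s ∈ Icc θ₀ (θ₀ + 2 * Real.pi), ∀ t ∈ Icc θ₀ (θ₀ + 2 * Real.pi), s ≤ t →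
      dist (G s) (G t) ≤ L * r * (t - s) := by
    intro s hs t ht hst
    have h := hGLip.dist_le_mul s hs t ht
    rwa [hC, dist_comm s, Real.dist_eq, abs_of_nonneg (sub_nonneg.2 hst)] at h
  have hGP : ∀ s ∈ Icc θ₀ (θ₀ + 2 * Real.pi), ∀ t ∈ Icc θ₀ (θ₀ + 2 * Real.pi), s ≤ t →
      dist (G s) (G t) ≤ L * Real.pi / 2 * dist (P s) (P t) := by
    intro s hs t ht hst
    have hmin : dist (G s) (G t) ≤ L * r * min (t - s) (s + 2 * Real.pi - t) := by
      rcases min_choice (t - s) (s + 2 * Real.pi - t) with h | h <;> rw [h]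
      · exact hGle s hs t ht hst
      · have h₁ := hGle θ₀ hend₀ s hs hs.1
        have h₂ := hGle t ht _ hend₁ ht.2
        rw [dist_comm, hG_ends] at h₁
        rw [dist_comm] at h₂
        linarith [dist_triangle (G s) (G (θ₀ + 2 * Real.pi)) (G t)]
    calc dist (G s) (G t) ≤ L * (r * min (t - s) (s + 2 * Real.pi - t)) := by
          rwa [← mul_assoc]
      _ ≤ L * (Real.pi / 2 * dist (P s) (P t)) := mul_le_mul_of_nonneg_left
          (mul_min_le_dist_circlePoint c hr.le hst (by linarith [hs.1, ht.2])) hL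
      _ = L * Real.pi / 2 * dist (P s) (P t) := by ring
  have hangle : ∀ x, ∃ θ, x ∈ sphere c r → θ ∈ Icc θ₀ (θ₀ + 2 * Real.pi) ∧ P θ = x := by
    intro x
    by_cases hx : x ∈ sphere c r
    · obtain ⟨θ, hθ, hθx⟩ := exists_circlePoint_eq hx θ₀
      exact ⟨θ, fun _ => ⟨Ico_subset_Icc_self hθ, hθx⟩⟩
    · exact ⟨0, fun h => absurd h hx⟩
  choose θ hθ using hangle
  refine ⟨G ∘ θ, fun x hx y hy => ?_, fun x hx => ?_⟩
  · obtain ⟨hxI, hPx⟩ := hθ x hx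
    obtain ⟨hyI, hPy⟩ := hθ y hy
    rcases le_total (θ x) (θ y) with h | h
    · simpa only [Function.comp_apply, hPx, hPy] using hGP _ hxI _ hyI h
    · rw [dist_comm, dist_comm x]
      simpa only [Function.comp_apply, hPx, hPy] using hGP _ hyI _ hxI h
  · obtain ⟨hxI, hPx⟩ := hθ x (hK hx)
    rw [Function.comp_apply, hGf _ hxI (by rwa [hPx]), hPx]
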